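/- Let g, h : ℝ → ℝ² be free maps (g'(t), g''(t) linearly independent for every t, and likewise h'(t), h''(t)) and let F : ℝ² → ℝ⁴ be defined by F(x,y) = (g(x), h(y)). Then the linearization of the pullback-metric operator at F is surjective: for every triple of smooth functions δg_{xx}, δg_{xy}, δg_{yy} : ℝ² → ℝ there exists a smooth map δf : ℝ² → ℝ⁴ such that ⟨∂_α F, ∂_β δf⟩ + ⟨∂_β F, ∂_α δf⟩ = δg_{αβ} on ℝ² for all α, β ∈ {x, y} (with δg_{yx} := δg_{xy}). -/

import Mathlib

/-- The partial derivative of a map `f : ℝ^m → E` with respect to the `α`-th coordinate,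
taken pointwise. -/
noncomputable def pd {m : ℕ} {E : Type*} [NormedAddCommGroup E] [NormedSpace ℝ E]
    (α : Fin m) (f : EuclideanSpace ℝ (Fin m) → E) :
    EuclideanSpace ℝ (Fin m) → E :=
  fun x => fderiv ℝ f x (EuclideanSpace.single α 1)

/-!
Look for `δf = u` by prescribing its components along the derivatives of `F`. Since `F_xy = 0`,
Leibniz gives `⟨F_x, u_x⟩ = ⟨F_x, u⟩_x - ⟨F_xx, u⟩` and `⟨F_x, u_y⟩ = ⟨F_x, u⟩_y`, and likewise with
`x` and `y` exchanged. So it suffices to take a smooth `A` with `A_y = δg_xy` and to solve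
`⟨F_x, u⟩ = A`, `⟨F_y, u⟩ = 0`, `⟨F_xx, u⟩ = A_x - δg_xx / 2`, `⟨F_yy, u⟩ = -δg_yy / 2`.
No derivative of `u` is left: freeness makes `F_x, F_xx, F_y, F_yy` linearly independent, so at each
point this is a solvable linear system, and Cramer's rule for the Gram matrix of these vectors gives
a solution depending smoothly on the point.
-/

open Set Filter Topology
open scoped ContDiff InnerProductSpace

section ParametricIntegral

theorem exists_eventually_forall_uIcc_norm_le {X G : Type*} [TopologicalSpace X]
    [SeminormedAddCommGroup G] {Ψ : X × ℝ → G} (hΨ : Continuous Ψ) (a b : ℝ) (x : X) :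
    ∃ C, ∀ᶠ y in 𝓝 x, ∀ t ∈ uIcc a b, ‖Ψ (y, t)‖ ≤ C := by
  obtain ⟨C, hC⟩ := isCompact_uIcc.exists_bound_of_continuousOn (s := uIcc a b)
    (hΨ.comp (Continuous.prodMk_right x)).continuousOn
  refine ⟨C + 1, isCompact_uIcc.eventually_forall_of_forall_eventually fun t ht => ?_⟩
  have hlt : ‖Ψ (x, t)‖ < C + 1 := (hC t ht).trans_lt (lt_add_one C)
  exact (hΨ.norm.continuousAt.eventually_lt_const hlt).mono fun _ => le_of_lt

universe u

variable {V G : Type u} [NormedAddCommGroup V] [NormedSpace ℝ V]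
  [NormedAddCommGroup G] [NormedSpace ℝ G]

theorem hasFDerivAt_intervalIntegral_of_contDiff {Φ : V × ℝ → G} (hΦ : ContDiff ℝ 1 Φ) (a b : ℝ)
    (x : V) :
    HasFDerivAt (fun y => ∫ t in a..b, Φ (y, t))
      (∫ t in a..b, fderiv ℝ Φ (x, t) ∘L ContinuousLinearMap.inl ℝ V ℝ) x := by
  have hΦc : Continuous Φ := hΦ.continuous
  have hΦ'c : Continuous fun q => fderiv ℝ Φ q ∘L ContinuousLinearMap.inl ℝ V ℝ :=
    (hΦ.continuous_fderiv one_ne_zero).clm_comp continuous_const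
  obtain ⟨C, hC⟩ := exists_eventually_forall_uIcc_norm_le hΦ'c a b x
  refine intervalIntegral.hasFDerivAt_integral_of_dominated_of_fderiv_le
    (F := fun y t => Φ (y, t))
    (F' := fun y t => fderiv ℝ Φ (y, t) ∘L ContinuousLinearMap.inl ℝ V ℝ)
    (bound := fun _ => C) hC
    (.of_forall fun y => (hΦc.comp (Continuous.prodMk_right y)).aestronglyMeasurable)
    ((hΦc.comp (Continuous.prodMk_right x)).intervalIntegrable a b)
    (hΦ'c.comp (Continuous.prodMk_right x)).aestronglyMeasurable
    (.of_forall fun t ht y hy => hy t (uIoc_subset_uIcc ht))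
    intervalIntegrable_const
    (.of_forall fun t _ y _ => ?_)
  exact (hΦ.differentiable one_ne_zero (y, t)).hasFDerivAt.comp y (hasFDerivAt_prodMk_left y t)

theorem contDiff_intervalIntegral_of_contDiff {n : ℕ∞} {Φ : V × ℝ → G} (hΦ : ContDiff ℝ n Φ)
    (a b : ℝ) : ContDiff ℝ n fun x => ∫ t in a..b, Φ (x, t) := by
  refine contDiff_iff_forall_nat_le.2 fun k hk => ?_
  replace hΦ : ContDiff ℝ k Φ := hΦ.of_le (by exact_mod_cast hk)
  clear hk
  induction k generalizing G with
  | zero =>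
    exact contDiff_zero.2 <|
      intervalIntegral.continuous_parametric_intervalIntegral_of_continuous'
        (f := fun x t => Φ (x, t)) hΦ.continuous a b
  | succ k ih =>
    have hΦ' : ContDiff ℝ k fun q => fderiv ℝ Φ q ∘L ContinuousLinearMap.inl ℝ V ℝ :=
      (hΦ.fderiv_right (by norm_cast)).clm_comp contDiff_const
    rw [Nat.cast_add_one]
    exact contDiff_succ_iff_hasFDerivAt.2 ⟨_, ih hΦ',
      hasFDerivAt_intervalIntegral_of_contDiff (hΦ.of_le (by norm_cast; lia)) a b⟩

/-- The witness is `x ↦ ∫ r in 0..ℓ x, k (x + (r - ℓ x) • e)`, rescaled to a fixed interval. -/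
theorem exists_contDiff_fderiv_apply_eq [CompleteSpace G] {n : ℕ∞} (hn : n ≠ 0) {k : V → G}
    (hk : ContDiff ℝ n k) {e : V} {ℓ : V →L[ℝ] ℝ} (hℓ : ℓ e = 1) :
    ∃ A : V → G, ContDiff ℝ n A ∧ ∀ x, fderiv ℝ A x e = k x := by
  let A : V → G := fun x => ∫ t in (0 : ℝ)..1, ℓ x • k (x + (t * ℓ x - ℓ x) • e)
  have hA : ContDiff ℝ n A := contDiff_intervalIntegral_of_contDiff
    (Φ := fun q : V × ℝ => ℓ q.1 • k (q.1 + (q.2 * ℓ q.1 - ℓ q.1) • e)) (by fun_prop) 0 1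
  refine ⟨A, hA, fun x => ?_⟩
  have hA_line (s : ℝ) : A (x + s • e) = ∫ r in (0 : ℝ)..ℓ x + s, k (x + (r - ℓ x) • e) := by
    have hpoint (t : ℝ) : x + s • e + (t * (ℓ x + s) - (ℓ x + s)) • e
        = x + (t * (ℓ x + s) - ℓ x) • e := by module
    simp only [A, map_add, map_smul, hℓ, smul_eq_mul, mul_one, hpoint,
      intervalIntegral.integral_smul]
    simpa using intervalIntegral.smul_integral_comp_mul_right
      (fun r => k (x + (r - ℓ x) • e)) (a := 0) (b := 1) (ℓ x + s)
  have hkc : Continuous fun r : ℝ => k (x + (r - ℓ x) • e) := by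
    have := hk.continuous
    fun_prop
  have hftc : HasDerivAt (fun y => ∫ r in (0 : ℝ)..y, k (x + (r - ℓ x) • e)) (k x) (ℓ x + 0) := by
    simpa using hkc.integral_hasStrictDerivAt 0 (ℓ x + 0) |>.hasDerivAt
  have hline : HasLineDerivAt ℝ A (k x) x e := by
    simpa only [HasLineDerivAt, hA_line] using hftc.comp_const_add (ℓ x) 0
  exact (hA.differentiable (by exact_mod_cast hn) x).hasFDerivAt.hasLineDerivAt e |>.unique hline

end ParametricIntegral

section LinearSystem

variable {X ι : Type*} [NormedAddCommGroup X] [NormedSpace ℝ X] {n : ℕ∞ω}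

theorem contDiff_matrix_det [Fintype ι] [DecidableEq ι] {M : X → Matrix ι ι ℝ}
    (hM : ∀ i j, ContDiff ℝ n fun x => M x i j) :
    ContDiff ℝ n fun x => (M x).det := by
  simp only [Matrix.det_apply']
  fun_prop

theorem contDiff_matrix_cramer [Fintype ι] [DecidableEq ι] {M : X → Matrix ι ι ℝ}
    {b : X → ι → ℝ} (hM : ∀ i j, ContDiff ℝ n fun x => M x i j)
    (hb : ∀ i, ContDiff ℝ n fun x => b x i) (k : ι) :
    ContDiff ℝ n fun x => (M x).cramer (b x) k := by
  simp only [Matrix.cramer_apply]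
  refine contDiff_matrix_det fun i j => ?_
  obtain rfl | hjk := eq_or_ne j k
  · simpa using hb i
  · simpa [hjk] using hM i j

theorem exists_contDiff_inner_eq [Finite ι] {V : Type*} [NormedAddCommGroup V]
    [InnerProductSpace ℝ V]
    {v : X → ι → V} {c : X → ι → ℝ} (hv : ∀ i, ContDiff ℝ n fun x => v x i)
    (hc : ∀ i, ContDiff ℝ n fun x => c x i) (hvi : ∀ x, LinearIndependent ℝ (v x)) :
    ∃ u : X → V, ContDiff ℝ n u ∧ ∀ x i, ⟪v x i, u x⟫_ℝ = c x i := by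
  classical
  cases nonempty_fintype ι
  let M (x : X) : Matrix ι ι ℝ := Matrix.gram ℝ (v x)
  have hM (i j : ι) : ContDiff ℝ n fun x => M x i j := (hv i).inner ℝ (hv j)
  have hdet (x : X) : (M x).det ≠ 0 := Matrix.det_gram_ne_zero_iff_linearIndependent.2 (hvi x)
  refine ⟨fun x => (M x).det⁻¹ • ∑ j, (M x).cramer (c x) j • v x j,
    ((contDiff_matrix_det hM).inv hdet).smul <|
      .sum fun j _ => (contDiff_matrix_cramer hM hc j).smul (hv j), fun x i => ?_⟩
  calc ⟪v x i, (M x).det⁻¹ • ∑ j, (M x).cramer (c x) j • v x j⟫_ℝ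
      = (M x).det⁻¹ * (M x).mulVec ((M x).cramer (c x)) i := by
        simp [M, inner_smul_right, inner_sum, Matrix.mulVec, dotProduct, mul_comm]
    _ = c x i := by simp [Matrix.mulVec_cramer, hdet x]

end LinearSystem

section PartialDerivatives

variable {m : ℕ} {E V : Type*} [NormedAddCommGroup E] [NormedSpace ℝ E]
  [NormedAddCommGroup V] [InnerProductSpace ℝ V]

theorem contDiff_pd {f : EuclideanSpace ℝ (Fin m) → E} (hf : ContDiff ℝ ∞ f) (α : Fin m) :
    ContDiff ℝ ∞ (pd α f) :=
  (contDiff_infty_iff_fderiv.1 hf).2.clm_apply contDiff_const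

theorem pd_fun_zero (α : Fin m) : pd α (0 : EuclideanSpace ℝ (Fin m) → E) = 0 := by
  funext p
  simp [pd]

theorem pd_comm {f : EuclideanSpace ℝ (Fin m) → E} (hf : ContDiff ℝ 2 f) (α β : Fin m) :
    pd α (pd β f) = pd β (pd α f) := by
  funext p
  have hf' : DifferentiableAt ℝ (fderiv ℝ f) p :=
    (hf.fderiv_right (m := 1) le_rfl).differentiable one_ne_zero p
  have pd_pd_eq (γ δ : Fin m) : pd γ (pd δ f) p =
      fderiv ℝ (fderiv ℝ f) p (EuclideanSpace.single γ 1) (EuclideanSpace.single δ 1) := by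
    change fderiv ℝ (fun q => fderiv ℝ f q _) p _ = _
    simp [fderiv_clm_apply hf' (differentiableAt_const _)]
  rw [pd_pd_eq, pd_pd_eq]
  exact hf.contDiffAt.isSymmSndFDerivAt (by simp) _ _

theorem inner_pd_eq_sub {f u : EuclideanSpace ℝ (Fin m) → V} (hf : Differentiable ℝ f)
    (hu : Differentiable ℝ u) (α : Fin m) (p : EuclideanSpace ℝ (Fin m)) :
    ⟪f p, pd α u p⟫_ℝ = pd α (fun q => ⟪f q, u q⟫_ℝ) p - ⟪pd α f p, u p⟫_ℝ :=
  eq_sub_of_add_eq (fderiv_inner_apply ℝ (hf p) (hu p) _).symm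

theorem exists_contDiff_pd_eq {G : Type} [NormedAddCommGroup G] [NormedSpace ℝ G] [CompleteSpace G]
    {n : ℕ∞} (hn : n ≠ 0) {k : EuclideanSpace ℝ (Fin m) → G} (hk : ContDiff ℝ n k) (α : Fin m) :
    ∃ A : EuclideanSpace ℝ (Fin m) → G, ContDiff ℝ n A ∧ pd α A = k := by
  obtain ⟨A, hA, hAk⟩ := exists_contDiff_fderiv_apply_eq hn hk
    (e := EuclideanSpace.single α 1) (ℓ := EuclideanSpace.proj α) (by simp)
  exact ⟨A, hA, funext hAk⟩

end PartialDerivatives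

theorem linearization_surjective_at_product_of_free_curves_general
    {V : Type*} [NormedAddCommGroup V] [InnerProductSpace ℝ V]
    {F : EuclideanSpace ℝ (Fin 2) → V} (hF : ContDiff ℝ ∞ F)
    (hmixed : pd 0 (pd 1 F) = 0)
    (hindep : ∀ p, LinearIndependent ℝ
      ![pd 0 F p, pd 0 (pd 0 F) p, pd 1 F p, pd 1 (pd 1 F) p])
    {δgxx δgxy δgyy : EuclideanSpace ℝ (Fin 2) → ℝ}
    (hδgxx : ContDiff ℝ ∞ δgxx) (hδgxy : ContDiff ℝ ∞ δgxy) (hδgyy : ContDiff ℝ ∞ δgyy) :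
    ∃ δf : EuclideanSpace ℝ (Fin 2) → V, ContDiff ℝ ∞ δf ∧
      ∀ α β p, ⟪pd α F p, pd β δf p⟫_ℝ + ⟪pd β F p, pd α δf p⟫_ℝ
        = ![![δgxx, δgxy], ![δgxy, δgyy]] α β p := by
  obtain ⟨A, hA, hAy⟩ := exists_contDiff_pd_eq (by simp) hδgxy 1
  have hF' (α : Fin 2) : ContDiff ℝ ∞ (pd α F) := contDiff_pd hF α
  obtain ⟨u, hu, hsys⟩ := exists_contDiff_inner_eq (n := ∞)
    (v := fun p => ![pd 0 F p, pd 0 (pd 0 F) p, pd 1 F p, pd 1 (pd 1 F) p])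
    (c := fun p => ![A p, pd 0 A p - δgxx p / 2, 0, -(δgyy p / 2)])
    (by simp [Fin.forall_fin_succ, hF', contDiff_pd])
    (by simp [Fin.forall_fin_succ, hA, contDiff_const, hδgyy.div_const, ContDiff.neg,
      (contDiff_pd hA 0).sub (hδgxx.div_const 2)]) hindep
  have hFx : (fun p => ⟪pd 0 F p, u p⟫_ℝ) = A := funext fun p => hsys p 0
  have hFxx (p) : ⟪pd 0 (pd 0 F) p, u p⟫_ℝ = pd 0 A p - δgxx p / 2 := hsys p 1
  have hFy : (fun p => ⟪pd 1 F p, u p⟫_ℝ) = 0 := funext fun p => hsys p 2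
  have hFyy (p) : ⟪pd 1 (pd 1 F) p, u p⟫_ℝ = -(δgyy p / 2) := hsys p 3
  have hmixed' : pd 1 (pd 0 F) = 0 := (pd_comm (hF.of_le (by norm_cast)) 1 0).trans hmixed
  have hparts (α β : Fin 2) (p) := inner_pd_eq_sub ((hF' α).differentiable (by simp))
    (hu.differentiable (by simp)) β p
  have hxx (p) : ⟪pd 0 F p, pd 0 u p⟫_ℝ = δgxx p / 2 := by
    rw [hparts, hFx, hFxx, sub_sub_cancel]
  have hxy (p) : ⟪pd 0 F p, pd 1 u p⟫_ℝ = δgxy p := by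
    simp [hparts, hFx, hAy, hmixed']
  have hyx (p) : ⟪pd 1 F p, pd 0 u p⟫_ℝ = 0 := by
    simp [hparts, hFy, hmixed, pd_fun_zero]
  have hyy (p) : ⟪pd 1 F p, pd 1 u p⟫_ℝ = δgyy p / 2 := by
    simp [hparts, hFy, hFyy, pd_fun_zero]
  refine ⟨u, hu, fun α β p => ?_⟩
  fin_cases α <;> fin_cases β <;> simp [hxx, hxy, hyx, hyy]

section ProductOfCurves

variable {E E' W : Type*} [NormedAddCommGroup E] [NormedSpace ℝ E]
  [NormedAddCommGroup E'] [NormedSpace ℝ E'] [NormedAddCommGroup W] [NormedSpace ℝ W]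

/-- The surface `(x, y) ↦ (g x, h y)` swept out by two curves. Its target is the plain product
`E × E'`; a linear map out of that product supplies the Euclidean structure. -/
def productOfCurves (g : ℝ → E) (h : ℝ → E') (p : EuclideanSpace ℝ (Fin 2)) : E × E' :=
  (g (p 0), h (p 1))

theorem contDiff_productOfCurves {n : ℕ∞ω} {g : ℝ → E} {h : ℝ → E'} (hg : ContDiff ℝ n g)
    (hh : ContDiff ℝ n h) : ContDiff ℝ n (productOfCurves g h) := by
  unfold productOfCurves
  fun_prop

theorem hasFDerivAt_productOfCurves {g : ℝ → E} {h : ℝ → E'} (hg : Differentiable ℝ g)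
    (hh : Differentiable ℝ h) (p : EuclideanSpace ℝ (Fin 2)) :
    HasFDerivAt (productOfCurves g h)
      (((EuclideanSpace.proj 0 : EuclideanSpace ℝ (Fin 2) →L[ℝ] ℝ).smulRight (deriv g (p 0))).prod
        ((EuclideanSpace.proj 1 : EuclideanSpace ℝ (Fin 2) →L[ℝ] ℝ).smulRight
          (deriv h (p 1)))) p := by
  have hcoord (i : Fin 2) : HasFDerivAt (fun q : EuclideanSpace ℝ (Fin 2) => q i)
      (EuclideanSpace.proj i : EuclideanSpace ℝ (Fin 2) →L[ℝ] ℝ) p :=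
    (EuclideanSpace.proj i : EuclideanSpace ℝ (Fin 2) →L[ℝ] ℝ).hasFDerivAt
  convert! ((hg (p 0)).hasDerivAt.hasFDerivAt.comp p (hcoord 0)).prodMk
    ((hh (p 1)).hasDerivAt.hasFDerivAt.comp p (hcoord 1)) using 1

theorem pd_clm_comp_productOfCurves (L : E × E' →L[ℝ] W) {g : ℝ → E} {h : ℝ → E'}
    (hg : Differentiable ℝ g) (hh : Differentiable ℝ h) (α : Fin 2)
    (p : EuclideanSpace ℝ (Fin 2)) :
    pd α (L ∘ productOfCurves g h) p =
      L (EuclideanSpace.single α (1 : ℝ) 0 • deriv g (p 0),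
        EuclideanSpace.single α (1 : ℝ) 1 • deriv h (p 1)) := by
  rw [pd, (L.hasFDerivAt.comp p (hasFDerivAt_productOfCurves hg hh p)).fderiv]
  rfl

theorem pd_zero_clm_comp_productOfCurves (L : E × E' →L[ℝ] W) {g : ℝ → E} {h : ℝ → E'}
    (hg : Differentiable ℝ g) (hh : Differentiable ℝ h) :
    pd 0 (L ∘ productOfCurves g h) = L ∘ productOfCurves (deriv g) 0 := by
  funext p
  simp [pd_clm_comp_productOfCurves L hg hh, productOfCurves]

theorem pd_one_clm_comp_productOfCurves (L : E × E' →L[ℝ] W) {g : ℝ → E} {h : ℝ → E'}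
    (hg : Differentiable ℝ g) (hh : Differentiable ℝ h) :
    pd 1 (L ∘ productOfCurves g h) = L ∘ productOfCurves 0 (deriv h) := by
  funext p
  simp [pd_clm_comp_productOfCurves L hg hh, productOfCurves]

theorem pd_zero_pd_one_clm_comp_productOfCurves (L : E × E' →L[ℝ] W) {g : ℝ → E} {h : ℝ → E'}
    (hg : Differentiable ℝ g) (hh : ContDiff ℝ 2 h) :
    pd 0 (pd 1 (L ∘ productOfCurves g h)) = 0 := by
  rw [pd_one_clm_comp_productOfCurves L hg (hh.differentiable two_ne_zero),
    pd_zero_clm_comp_productOfCurves L differentiable_zero hh.differentiable_deriv_two]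
  funext p
  simp [productOfCurves, Prod.mk_zero_zero]

theorem linearIndependent_append_inl_inr {R M M' : Type*} [Ring R] [AddCommGroup M]
    [AddCommGroup M'] [Module R M] [Module R M'] {m n : ℕ} {v : Fin m → M} {w : Fin n → M'}
    (hv : LinearIndependent R v) (hw : LinearIndependent R w) :
    LinearIndependent R
      (Fin.append (LinearMap.inl R M M' ∘ v) (LinearMap.inr R M M' ∘ w)) := by
  rw [← linearIndependent_equiv finSumFinEquiv]
  convert! linearIndependent_inl_union_inr' hv hw using 1
  ext (i | j) <;> simp

theorem linearIndependent_pd_clm_comp_productOfCurves {L : E × E' →L[ℝ] W}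
    (hL : Function.Injective L) {g : ℝ → E} {h : ℝ → E'}
    (hg : ContDiff ℝ 2 g) (hh : ContDiff ℝ 2 h) {p : EuclideanSpace ℝ (Fin 2)}
    (hgfree : LinearIndependent ℝ ![deriv g (p 0), deriv (deriv g) (p 0)])
    (hhfree : LinearIndependent ℝ ![deriv h (p 1), deriv (deriv h) (p 1)]) :
    LinearIndependent ℝ
      ![pd 0 (L ∘ productOfCurves g h) p, pd 0 (pd 0 (L ∘ productOfCurves g h)) p,
        pd 1 (L ∘ productOfCurves g h) p, pd 1 (pd 1 (L ∘ productOfCurves g h)) p] := by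
  have hg₀ : Differentiable ℝ g := hg.differentiable two_ne_zero
  have hh₀ : Differentiable ℝ h := hh.differentiable two_ne_zero
  rw [pd_zero_clm_comp_productOfCurves L hg₀ hh₀, pd_one_clm_comp_productOfCurves L hg₀ hh₀,
    pd_zero_clm_comp_productOfCurves L hg.differentiable_deriv_two differentiable_zero,
    pd_one_clm_comp_productOfCurves L differentiable_zero hh.differentiable_deriv_two]
  convert! (linearIndependent_append_inl_inr hgfree hhfree).map'
    (L : E × E' →ₗ[ℝ] W) (LinearMap.ker_eq_bot.2 hL) using 1
  ext i
  fin_cases i <;> rfl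

end ProductOfCurves

theorem exists_injective_clm_concat :
    ∃ L : EuclideanSpace ℝ (Fin 2) × EuclideanSpace ℝ (Fin 2) →L[ℝ] EuclideanSpace ℝ (Fin 4),
      Function.Injective L ∧ ∀ v w, L (v, w) = !₂[v 0, v 1, w 0, w 1] := by
  let e := (EuclideanSpace.finAddEquivProd (𝕜 := ℝ) (n := 2) (m := 2)).symm
  refine ⟨e.toContinuousLinearMap, e.injective, fun v w => ?_⟩
  ext i
  fin_cases i <;> rfl

/-- If `g, h : ℝ → ℝ²` are free maps and `F(x,y) = (g(x), h(y)) : ℝ² → ℝ⁴`, then the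
linearization of the pullback-metric operator at `F` is surjective: for all smooth
`δg_{xx}, δg_{xy}, δg_{yy}` there is a smooth `δf : ℝ² → ℝ⁴` with
`⟨∂_α F, ∂_β δf⟩ + ⟨∂_β F, ∂_α δf⟩ = δg_{αβ}` for all `α, β ∈ {x,y}`
(with `δg_{yx} := δg_{xy}`). -/
theorem linearization_surjective_at_product_of_free_curves
    (g h : ℝ → EuclideanSpace ℝ (Fin 2))
    (hg : ContDiff ℝ (⊤ : ℕ∞) g) (hh : ContDiff ℝ (⊤ : ℕ∞) h)
    (hgfree : ∀ t : ℝ, LinearIndependent ℝ ![deriv g t, deriv (deriv g) t])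
    (hhfree : ∀ t : ℝ, LinearIndependent ℝ ![deriv h t, deriv (deriv h) t])
    (F : EuclideanSpace ℝ (Fin 2) → EuclideanSpace ℝ (Fin 4))
    (hF : F = fun p => (WithLp.equiv 2 (Fin 4 → ℝ)).symm
        ![g (p 0) 0, g (p 0) 1, h (p 1) 0, h (p 1) 1])
    (δgxx δgxy δgyy : EuclideanSpace ℝ (Fin 2) → ℝ)
    (hδgxx : ContDiff ℝ (⊤ : ℕ∞) δgxx) (hδgxy : ContDiff ℝ (⊤ : ℕ∞) δgxy) (hδgyy : ContDiff ℝ (⊤ : ℕ∞) δgyy) :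
    ∃ δf : EuclideanSpace ℝ (Fin 2) → EuclideanSpace ℝ (Fin 4),
      ContDiff ℝ (⊤ : ℕ∞) δf
      ∧ ∀ α β : Fin 2, ∀ p : EuclideanSpace ℝ (Fin 2),
          (inner ℝ (pd α F p) (pd β δf p) : ℝ) + (inner ℝ (pd β F p) (pd α δf p) : ℝ)
            = ![![δgxx, δgxy], ![δgxy, δgyy]] α β p := by
  obtain ⟨L, hL, hL_apply⟩ := exists_injective_clm_concat
  obtain rfl : F = L ∘ productOfCurves g h := hF.trans (funext fun _ => (hL_apply _ _).symm)
  have hg₂ : ContDiff ℝ 2 g := hg.of_le (by norm_cast)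
  have hh₂ : ContDiff ℝ 2 h := hh.of_le (by norm_cast)
  exact linearization_surjective_at_product_of_free_curves_general
    (L.contDiff.comp (contDiff_productOfCurves hg hh))
    (pd_zero_pd_one_clm_comp_productOfCurves L (hg₂.differentiable two_ne_zero) hh₂)
    (fun p => linearIndependent_pd_clm_comp_productOfCurves hL hg₂ hh₂ (hgfree _) (hhfree _))
    hδgxx hδgxy hδgyy
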